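/- For every real C with 0 ≤ C < 1 there exists a real C* with C ≤ C* < 1 such that the following holds: for every subset X' of the hyperbolic plane ℍ, every point ξ ∈ ℍ \ X', and every C-Lipschitz map f : X' → ℍ, there exists a point η ∈ ℍ with d(η, f(x)) ≤ C*·d(ξ, x) for all x ∈ X'; in other words, f extends to a C*-Lipschitz map on X' ∪ {ξ}. The constant C* depends only on C. -/

import Mathlib

open scoped UpperHalfPlane

/-!
Call `∑ᵢⱼ wᵢ wⱼ cosh d(zᵢ, zⱼ)` the energy of a weighted family of points of `ℍ`. On the hyperboloid
in Minkowski space, `cosh d` is the Lorentzian product, so a positive combination of points `zᵢ` is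
`r` times a point `b`, the barycentre, and `∑ᵢ wᵢ cosh d(p, zᵢ) = r cosh d(p, b)` for all `p`. Hence
the energy is `r²`: it is at most `(∑ᵢ wᵢ cosh d(p, zᵢ))²`, with equality at `p = b`.

Let `yᵢ` be a `C`-Lipschitz image of `xᵢ`, and `Xᵢ = cosh d(ξ, xᵢ)`. Since
`cosh (C d) ≤ (cosh d) ^ C`, and since the concave power lies below its tangent at `Xᵢ Xⱼ`,
`cosh d(yᵢ, yⱼ) ≤ (1 - C) Xᵢ ^ C Xⱼ ^ C + C Xᵢ ^ (C - 1) Xⱼ ^ (C - 1) cosh d(xᵢ, xⱼ)`.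
The coefficients are products, so the energy inequality for the weights `wᵢ Xᵢ ^ (C - 1)` bounds the
energy of `y` by `(∑ᵢ wᵢ Xᵢ ^ C)²`. At the barycentre of `y` this reads
`∑ᵢ wᵢ cosh d(b, yᵢ) ≤ ∑ᵢ wᵢ Xᵢ ^ C`, and by convex duality one point `η` satisfies
`cosh d(η, yᵢ) ≤ Xᵢ ^ C ≤ cosh (√C d(ξ, xᵢ))` for all `i`, up to an arbitrarily small error that
compactness removes.
-/

section RealInequalities

open Real

lemma cosh_mul_le_cosh_rpow {p : ℝ} (hp0 : 0 ≤ p) (hp1 : p ≤ 1) (t : ℝ) :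
    cosh (p * t) ≤ cosh t ^ p := by
  have jensen := (concaveOn_rpow hp0 hp1).2 (Set.mem_Ici.2 (exp_pos t).le)
    (Set.mem_Ici.2 (exp_pos (-t)).le) one_half_pos.le one_half_pos.le (add_halves 1)
  simp only [smul_eq_mul, ← exp_mul] at jensen
  calc cosh (p * t) = 1 / 2 * exp (t * p) + 1 / 2 * exp (-t * p) := by
        rw [cosh_eq, mul_comm p t, neg_mul]; ring
    _ ≤ (1 / 2 * exp t + 1 / 2 * exp (-t)) ^ p := jensen
    _ = cosh t ^ p := by rw [cosh_eq]; ring_nf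

lemma rpow_le_tangent_line {p s t : ℝ} (hp0 : 0 ≤ p) (hp1 : p ≤ 1) (hs : 0 < s) (ht : 0 ≤ t) :
    t ^ p ≤ (1 - p) * s ^ p + p * (s ^ (p - 1) * t) := by
  have bernoulli : (t / s) ^ p ≤ 1 + p * (t / s - 1) := by
    simpa using rpow_one_add_le_one_add_mul_self
      (by linarith [div_nonneg ht hs.le] : -1 ≤ t / s - 1) hp0 hp1
  calc t ^ p = s ^ p * (t / s) ^ p := by
        rw [← mul_rpow hs.le (div_nonneg ht hs.le), mul_div_cancel₀ _ hs.ne']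
    _ ≤ s ^ p * (1 + p * (t / s - 1)) := by gcongr
    _ = (1 - p) * s ^ p + p * (s ^ (p - 1) * t) := by rw [rpow_sub_one hs.ne']; ring

lemma mul_cosh_mul_mul_sinh_le {m t : ℝ} (hm0 : 0 ≤ m) (hm1 : m ≤ 1) (ht : 0 ≤ t) :
    m * cosh (m * t) * sinh t ≤ sinh (m * t) * cosh t := by
  have hderiv (x : ℝ) : HasDerivAt (fun x ↦ sinh (m * x) * cosh x - m * cosh (m * x) * sinh x)
      ((1 - m ^ 2) * (sinh (m * x) * sinh x)) x := by
    have hmul : HasDerivAt (fun x ↦ m * x) m x := by simpa using (hasDerivAt_id x).const_mul m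
    exact ((hmul.sinh.mul (hasDerivAt_cosh x)).sub
      ((hmul.cosh.const_mul m).mul (hasDerivAt_sinh x))).congr_deriv (by ring)
  have hmono := monotoneOn_of_hasDerivWithinAt_nonneg (convex_Ici 0)
    (fun x _ ↦ (hderiv x).continuousAt.continuousWithinAt)
    (fun x _ ↦ (hderiv x).hasDerivWithinAt) fun x hx ↦ by
      rw [interior_Ici] at hx
      exact mul_nonneg (by nlinarith) (mul_nonneg
        (sinh_nonneg_iff.2 (mul_nonneg hm0 hx.le)) (sinh_nonneg_iff.2 hx.le))
  simpa using hmono Set.self_mem_Ici ht ht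

lemma cosh_rpow_sq_le_cosh_mul {m : ℝ} (hm0 : 0 ≤ m) (hm1 : m ≤ 1) (t : ℝ) :
    cosh t ^ (m ^ 2) ≤ cosh (m * t) := by
  wlog ht : 0 ≤ t generalizing t
  · simpa using this (-t) (by linarith)
  have hderiv (x : ℝ) : HasDerivAt (fun x ↦ log (cosh (m * x)) - m ^ 2 * log (cosh x))
      (m * (sinh (m * x) / cosh (m * x) - m * (sinh x / cosh x))) x := by
    have hmul : HasDerivAt (fun x ↦ m * x) m x := by simpa using (hasDerivAt_id x).const_mul m
    exact ((hmul.cosh.log (cosh_pos _).ne').sub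
      (((hasDerivAt_cosh x).log (cosh_pos x).ne').const_mul (m ^ 2))).congr_deriv (by ring)
  have hmono := monotoneOn_of_hasDerivWithinAt_nonneg (convex_Ici 0)
    (fun x _ ↦ (hderiv x).continuousAt.continuousWithinAt)
    (fun x _ ↦ (hderiv x).hasDerivWithinAt) fun x hx ↦ by
      rw [interior_Ici] at hx
      refine mul_nonneg hm0 (sub_nonneg.2 ?_)
      rw [← mul_div_assoc, div_le_div_iff₀ (cosh_pos x) (cosh_pos _)]
      linarith [mul_cosh_mul_mul_sinh_le hm0 hm1 hx.le]
  have hlog : m ^ 2 * log (cosh t) ≤ log (cosh (m * t)) := by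
    simpa using hmono Set.self_mem_Ici ht ht
  rwa [← log_le_log_iff (rpow_pos_of_pos (cosh_pos t) _) (cosh_pos _), log_rpow (cosh_pos t)]

end RealInequalities

section ConvexDuality

variable {ι E : Type*} {s : Set E} {q : ι → E → ℝ}

lemma isOpen_setOf_exists_forall_lt [Finite ι] :
    IsOpen {v : ι → ℝ | ∃ z ∈ s, ∀ i, q i z < v i} := by
  simp only [Set.ofPred_exists, Set.ofPred_and, Set.ofPred_forall]
  exact isOpen_iUnion fun z ↦ isOpen_const.inter <|
    isOpen_iInter_of_finite fun i ↦ isOpen_lt continuous_const (continuous_apply i)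

variable [AddCommGroup E] [Module ℝ E]

lemma convex_setOf_exists_forall_lt (hs : Convex ℝ s) (hq : ∀ i, ConvexOn ℝ s (q i)) :
    Convex ℝ {v : ι → ℝ | ∃ z ∈ s, ∀ i, q i z < v i} := by
  rw [convex_iff_forall_pos]
  rintro v ⟨z, hz, hzv⟩ v' ⟨z', hz', hzv'⟩ a b ha hb hab
  refine ⟨a • z + b • z', hs hz hz' ha.le hb.le hab, fun i ↦ ?_⟩
  calc q i (a • z + b • z') ≤ a * q i z + b * q i z' := (hq i).2 hz hz' ha.le hb.le hab
    _ < a * v i + b * v' i := by gcongr <;> apply_assumption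

lemma nonneg_of_forall_nonneg_add_mul_pos {a b : ℝ} (h : ∀ t ≥ 0, 0 < a + t * b) : 0 ≤ b := by
  by_contra! hb
  have ha : 0 < a := by simpa using h 0 le_rfl
  have := h (-a / b) (div_nonneg_of_nonpos (by linarith) hb.le)
  rw [div_mul_cancel₀ _ hb.ne] at this
  linarith

/- Separate the origin from the open convex set of vectors exceeding some `(q i z)ᵢ`. This set is
closed under increasing coordinates, so the separating functional has nonnegative coefficients. -/
lemma exists_weights_of_forall_exists_nonneg [Fintype ι] (hs : Convex ℝ s) (hne : s.Nonempty)
    (hq : ∀ i, ConvexOn ℝ s (q i)) (hnonneg : ∀ z ∈ s, ∃ i, 0 ≤ q i z) :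
    ∃ w : ι → ℝ, 0 < w ∧ ∀ z ∈ s, 0 ≤ ∑ i, w i * q i z := by
  classical
  obtain ⟨f, hf⟩ := geometric_hahn_banach_point_open (x := 0) (convex_setOf_exists_forall_lt hs hq)
    isOpen_setOf_exists_forall_lt (by simpa using hnonneg)
  have hf_pos {z v} (hz : z ∈ s) (hv : ∀ i, q i z < v i) : 0 < f v := by
    simpa using hf v ⟨z, hz, hv⟩
  have hf_sum (v : ι → ℝ) : f v = ∑ i, f (Pi.single i 1) * v i := by
    conv_lhs => rw [pi_eq_sum_univ' v]
    simp [mul_comm]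
  obtain ⟨z₀, hz₀⟩ := hne
  have hw : 0 ≤ fun i ↦ f (Pi.single i 1) := fun i ↦
    nonneg_of_forall_nonneg_add_mul_pos (a := f fun j ↦ q j z₀ + 1) fun t ht ↦ by
      rw [← smul_eq_mul, ← map_smul, ← map_add]
      refine hf_pos hz₀ fun j ↦ (lt_add_one _).trans_le (le_add_of_nonneg_right ?_)
      exact smul_nonneg ht (Pi.single_nonneg.2 zero_le_one : (0 : ι → ℝ) ≤ Pi.single i 1) j
  refine ⟨_, hw.lt_of_ne fun h ↦ ?_, fun z hz ↦ ?_⟩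
  · refine (hf_pos (v := fun j ↦ q j z₀ + 1) hz₀ fun j ↦ lt_add_one _).ne ?_
    rw [hf_sum]
    exact (Finset.sum_eq_zero fun i _ ↦ by rw [← congrFun h i, Pi.zero_apply, zero_mul]).symm
  · rw [← hf_sum fun i ↦ q i z]
    have hlim : Filter.Tendsto (fun n : ℕ ↦ fun i ↦ q i z + 1 / ((n : ℝ) + 1)) Filter.atTop
        (nhds fun i ↦ q i z) := tendsto_pi_nhds.2 fun i ↦ by
      simpa using tendsto_one_div_add_atTop_nhds_zero_nat.const_add (q i z)
    exact ge_of_tendsto' ((f.continuous.tendsto _).comp hlim) fun n ↦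
      (hf_pos hz fun i ↦ lt_add_of_pos_right _ Nat.one_div_pos_of_nat).le

end ConvexDuality

section Energy

open Real

variable {ι : Type*} [Fintype ι] {w : ι → ℝ}

/- Since `cosh_dist'` is a squared Euclidean distance up to factors `im`, the parallel axis theorem
for the weights `wᵢ / im zᵢ` reads off `b` from a Euclidean mean and second moment. -/
lemma exists_barycentre (hw : 0 < w) (z : ι → ℍ) :
    ∃ b : ℍ, ∃ r > 0, ∀ p : ℍ, ∑ i, w i * cosh (dist p (z i)) = r * cosh (dist p b) := by
  obtain ⟨hw0, i₀, hi₀⟩ := Pi.lt_def.1 hw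
  have hu0 (i : ι) : 0 ≤ w i / (z i).im := div_nonneg (hw0 i) (z i).im_pos.le
  have hu₀ : 0 < w i₀ / (z i₀).im := div_pos hi₀ (z i₀).im_pos
  set P := ∑ i, w i / (z i).im with hP_def
  have hP : 0 < P := Finset.sum_pos' (fun i _ ↦ hu0 i) ⟨i₀, Finset.mem_univ _, hu₀⟩
  set c := (∑ i, w i / (z i).im * (z i).re) / P with hc
  set S := ∑ i, w i / (z i).im * (((z i).re - c) ^ 2 + (z i).im ^ 2) with hS_def
  have hS : 0 < S := Finset.sum_pos' (fun i _ ↦ mul_nonneg (hu0 i) (by positivity))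
    ⟨i₀, Finset.mem_univ _, mul_pos hu₀ (by have := (z i₀).im_pos; positivity)⟩
  have hmean : ∑ i, w i / (z i).im * ((z i).re - c) = 0 := by
    simp only [mul_sub, Finset.sum_sub_distrib, ← Finset.sum_mul]
    rw [← hP_def, hc, mul_div_cancel₀ _ hP.ne', sub_self]
  have hm : 0 < √(S / P) := sqrt_pos.2 (div_pos hS hP)
  refine ⟨⟨⟨c, √(S / P)⟩, hm⟩, P * √(S / P), mul_pos hP hm, fun p ↦ ?_⟩
  have hterm (i : ι) : w i * cosh (dist p (z i)) =
      (((p.re - c) ^ 2 + p.im ^ 2) * (w i / (z i).im)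
        - 2 * (p.re - c) * (w i / (z i).im * ((z i).re - c))
        + w i / (z i).im * (((z i).re - c) ^ 2 + (z i).im ^ 2)) / (2 * p.im) := by
    have := (z i).im_pos
    rw [UpperHalfPlane.cosh_dist']
    field_simp
    ring
  calc ∑ i, w i * cosh (dist p (z i))
      = (((p.re - c) ^ 2 + p.im ^ 2) * P + S) / (2 * p.im) := by
        simp only [hterm, ← Finset.sum_div, Finset.sum_add_distrib, Finset.sum_sub_distrib,
          ← Finset.mul_sum, hmean, mul_zero, sub_zero, ← hP_def, ← hS_def]
    _ = P * √(S / P) * cosh (dist p ⟨⟨c, √(S / P)⟩, hm⟩) := by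
        rw [UpperHalfPlane.cosh_dist']
        change _ = P * √(S / P) * (((p.re - c) ^ 2 + p.im ^ 2 + √(S / P) ^ 2) /
          (2 * p.im * √(S / P)))
        rw [sq_sqrt (div_pos hS hP).le]
        field_simp

/-- The energy of the points `zᵢ` with weights `wᵢ`. For points of `ℍ`, placed on the hyperboloid,
it is the Minkowski square of the vector `∑ᵢ wᵢ zᵢ`. -/
noncomputable def coshEnergy {M : Type*} [Dist M] (w : ι → ℝ) (z : ι → M) : ℝ :=
  ∑ i, ∑ j, w i * w j * cosh (dist (z i) (z j))

lemma coshEnergy_eq_sum_mul_sum {M : Type*} [Dist M] (w : ι → ℝ) (z : ι → M) :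
    coshEnergy w z = ∑ i, w i * ∑ j, w j * cosh (dist (z i) (z j)) := by
  simp only [coshEnergy, Finset.mul_sum, mul_assoc]

lemma coshEnergy_eq_sq_of_barycentre {z : ι → ℍ} {b : ℍ} {r : ℝ}
    (hb : ∀ p : ℍ, ∑ i, w i * cosh (dist p (z i)) = r * cosh (dist p b)) :
    coshEnergy w z = r ^ 2 := by
  have hr : ∑ i, w i * cosh (dist (z i) b) = r := by
    simpa only [dist_comm b, dist_self, cosh_zero, mul_one] using hb b
  simp only [coshEnergy_eq_sum_mul_sum, hb, mul_left_comm _ r, ← Finset.mul_sum, hr, sq]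

lemma coshEnergy_le_sq_sum_mul_cosh_dist (hw : 0 < w) (z : ι → ℍ) (p : ℍ) :
    coshEnergy w z ≤ (∑ i, w i * cosh (dist p (z i))) ^ 2 := by
  obtain ⟨b, r, hr, hb⟩ := exists_barycentre hw z
  rw [coshEnergy_eq_sq_of_barycentre hb, hb p]
  exact pow_le_pow_left₀ hr.le (le_mul_of_one_le_right hr.le (one_le_cosh _)) 2

lemma exists_sum_mul_cosh_dist_eq_sqrt_coshEnergy (hw : 0 < w) (z : ι → ℍ) :
    ∃ b : ℍ, ∑ i, w i * cosh (dist b (z i)) = √(coshEnergy w z) := by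
  obtain ⟨b, r, hr, hb⟩ := exists_barycentre hw z
  exact ⟨b, by rw [hb b, coshEnergy_eq_sq_of_barycentre hb, sqrt_sq hr.le, dist_self,
    cosh_zero, mul_one]⟩

lemma cosh_dist_le_of_dist_le_mul {M N : Type*} [PseudoMetricSpace M] [PseudoMetricSpace N]
    {C s t : ℝ} (hC0 : 0 ≤ C) (hC1 : C ≤ 1) (hs : 0 < s) (ht : 0 < t) {x x' : M} {y y' : N}
    (hy : dist y y' ≤ C * dist x x') :
    cosh (dist y y') ≤
      (1 - C) * (s ^ C * t ^ C) + C * (s ^ (C - 1) * t ^ (C - 1) * cosh (dist x x')) := by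
  calc cosh (dist y y') ≤ cosh (C * dist x x') := by
        rwa [cosh_le_cosh, abs_of_nonneg dist_nonneg, abs_of_nonneg (mul_nonneg hC0 dist_nonneg)]
    _ ≤ cosh (dist x x') ^ C := cosh_mul_le_cosh_rpow hC0 hC1 _
    _ ≤ _ := by
        rw [← mul_rpow hs.le ht.le, ← mul_rpow hs.le ht.le]
        exact rpow_le_tangent_line hC0 hC1 (mul_pos hs ht) (cosh_pos _).le

lemma coshEnergy_le_of_lipschitz {N : Type*} [PseudoMetricSpace N] {C : ℝ} (hC0 : 0 ≤ C)
    (hC1 : C ≤ 1) (hw : 0 < w) {x : ι → ℍ} {y : ι → N}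
    (hxy : ∀ i j, dist (y i) (y j) ≤ C * dist (x i) (x j)) (ξ : ℍ) :
    coshEnergy w y ≤ (∑ i, w i * cosh (dist ξ (x i)) ^ C) ^ 2 := by
  set X : ι → ℝ := fun i ↦ cosh (dist ξ (x i))
  have hX (i : ι) : 0 < X i := cosh_pos _
  obtain ⟨hw0, i₀, hi₀⟩ := Pi.lt_def.1 hw
  have hv : 0 < fun i ↦ w i * X i ^ (C - 1) :=
    Pi.lt_def.2 ⟨fun i ↦ mul_nonneg (hw0 i) (rpow_nonneg (hX i).le _), i₀,
      mul_pos hi₀ (rpow_pos_of_pos (hX i₀) _)⟩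
  have hvX (i : ι) : w i * X i ^ (C - 1) * X i = w i * X i ^ C := by
    rw [mul_assoc, ← rpow_add_one (hX i).ne', sub_add_cancel]
  calc coshEnergy w y
      ≤ ∑ i, ∑ j, w i * w j * ((1 - C) * (X i ^ C * X j ^ C) +
          C * (X i ^ (C - 1) * X j ^ (C - 1) * cosh (dist (x i) (x j)))) := by
        refine Finset.sum_le_sum fun i _ ↦ Finset.sum_le_sum fun j _ ↦ ?_
        exact mul_le_mul_of_nonneg_left
          (cosh_dist_le_of_dist_le_mul hC0 hC1 (hX i) (hX j) (hxy i j)) (mul_nonneg (hw0 i) (hw0 j))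
    _ = (1 - C) * (∑ i, w i * X i ^ C) ^ 2 + C * coshEnergy (fun i ↦ w i * X i ^ (C - 1)) x := by
        rw [coshEnergy, sq, Finset.sum_mul_sum]
        simp only [Finset.mul_sum, ← Finset.sum_add_distrib]
        exact Finset.sum_congr rfl fun i _ ↦ Finset.sum_congr rfl fun j _ ↦ by ring
    _ ≤ (1 - C) * (∑ i, w i * X i ^ C) ^ 2 + C * (∑ i, w i * X i ^ C) ^ 2 := by
        have := coshEnergy_le_sq_sum_mul_cosh_dist hv x ξ
        simp only [X, hvX] at this ⊢
        gcongr
    _ = (∑ i, w i * X i ^ C) ^ 2 := by ring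

end Energy

section CommonPoint

open Real Metric

lemma convexOn_sq_dist_div_sub_mul_im (y : ℍ) (h : ℝ) :
    ConvexOn ℝ {z : ℂ | 0 < z.im}
      fun z ↦ dist z y ^ 2 / (2 * y.im) - (h - 1) * z.im := by
  have hs : Convex ℝ {z : ℂ | 0 < z.im} := convex_halfSpace_im_gt 0
  have hlin : ConcaveOn ℝ {z : ℂ | 0 < z.im} fun z ↦ (h - 1) * z.im :=
    ((h - 1) • Complex.imLm).concaveOn hs
  have hsq := ((convexOn_dist (y : ℂ) hs).pow (fun _ _ ↦ dist_nonneg) 2).smul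
    (inv_nonneg.2 (mul_nonneg zero_le_two y.im_pos.le))
  simpa only [Pi.sub_def, Pi.pow_apply, smul_eq_mul, inv_mul_eq_div] using! hsq.sub hlin

/- The factor `z.im` turns the condition `cosh (dist z y) < h` into a Euclidean convex one. -/
lemma im_mul_cosh_dist_sub (z y : ℍ) (h : ℝ) :
    z.im * (cosh (dist z y) - h) = dist (z : ℂ) y ^ 2 / (2 * y.im) - (h - 1) * z.im := by
  have := z.im_pos
  have := y.im_pos
  rw [UpperHalfPlane.cosh_dist]
  field_simp
  ring

lemma exists_forall_cosh_dist_lt {ι : Type*} [Fintype ι] {y : ι → ℍ} {h : ι → ℝ}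
    (hw : ∀ w : ι → ℝ, 0 < w → ∃ b : ℍ, ∑ i, w i * cosh (dist b (y i)) < ∑ i, w i * h i) :
    ∃ η : ℍ, ∀ i, cosh (dist η (y i)) < h i := by
  by_contra! hno
  obtain ⟨w, hw_pos, hw_nonneg⟩ := exists_weights_of_forall_exists_nonneg
    (convex_halfSpace_im_gt 0) ⟨Complex.I, by simp⟩
    (fun i ↦ convexOn_sq_dist_div_sub_mul_im (y i) (h i)) fun z hz ↦ by
      obtain ⟨i, hi⟩ := hno ⟨z, hz⟩
      exact ⟨i, (mul_nonneg hz.le (sub_nonneg.2 hi)).trans_eq (im_mul_cosh_dist_sub ⟨z, hz⟩ _ _)⟩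
  obtain ⟨b, hb⟩ := hw w hw_pos
  have hsum : 0 ≤ b.im * (∑ i, w i * cosh (dist b (y i)) - ∑ i, w i * h i) := by
    simp only [← Finset.sum_sub_distrib, ← mul_sub, Finset.mul_sum, mul_left_comm b.im,
      im_mul_cosh_dist_sub]
    exact hw_nonneg b b.im_pos
  exact hb.not_ge (sub_nonneg.1 (nonneg_of_mul_nonneg_right hsum b.im_pos))

lemma nonempty_iInter_closedBall {M ι : Type*} [PseudoMetricSpace M] [ProperSpace M] {c : ι → M}
    {r : ι → ℝ} (hfin : ∀ s : Finset ι, (⋂ i ∈ s, closedBall (c i) (r i)).Nonempty) :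
    (⋂ i, closedBall (c i) (r i)).Nonempty := by
  classical
  rcases isEmpty_or_nonempty ι with _ | ⟨⟨i₀⟩⟩
  · simpa using hfin ∅
  · refine ((isCompact_closedBall (c i₀) (r i₀)).inter_iInter_nonempty _
      (fun _ ↦ isClosed_closedBall) fun s ↦ ?_).mono Set.inter_subset_right
    simpa only [Finset.set_biInter_insert] using hfin (insert i₀ s)

end CommonPoint

section Extension

open Real Metric

lemma exists_forall_dist_lt_of_lipschitz {ι : Type*} [Finite ι] {C : ℝ} {x y : ι → ℍ}
    (hC0 : 0 ≤ C) (hC1 : C ≤ 1) (hxy : ∀ i j, dist (y i) (y j) ≤ C * dist (x i) (x j))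
    {ξ : ℍ} {r : ι → ℝ} (hr : ∀ i, √C * dist ξ (x i) < r i) :
    ∃ η : ℍ, ∀ i, dist η (y i) < r i := by
  have hr0 (i : ι) : 0 ≤ r i := (mul_nonneg (sqrt_nonneg C) dist_nonneg).trans (hr i).le
  have hlt (i : ι) : cosh (dist ξ (x i)) ^ C < cosh (r i) :=
    calc cosh (dist ξ (x i)) ^ C = cosh (dist ξ (x i)) ^ (√C ^ 2) := by rw [sq_sqrt hC0]
      _ ≤ cosh (√C * dist ξ (x i)) :=
        cosh_rpow_sq_le_cosh_mul (sqrt_nonneg C) (sqrt_le_one.2 hC1) _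
      _ < cosh (r i) :=
        cosh_strictMonoOn (mul_nonneg (sqrt_nonneg C) dist_nonneg) (hr0 i) (hr i)
  have := Fintype.ofFinite ι
  obtain ⟨η, hη⟩ := exists_forall_cosh_dist_lt (y := y) (h := fun i ↦ cosh (r i)) fun w hw ↦ by
    obtain ⟨b, hb⟩ := exists_sum_mul_cosh_dist_eq_sqrt_coshEnergy hw y
    obtain ⟨hw0, i₀, hi₀⟩ := Pi.lt_def.1 hw
    refine ⟨b, ?_⟩
    calc ∑ i, w i * cosh (dist b (y i)) = √(coshEnergy w y) := hb
      _ ≤ ∑ i, w i * cosh (dist ξ (x i)) ^ C := sqrt_le_iff.2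
        ⟨Finset.sum_nonneg fun i _ ↦ mul_nonneg (hw0 i) (rpow_nonneg (cosh_pos _).le _),
          coshEnergy_le_of_lipschitz hC0 hC1 hw hxy ξ⟩
      _ < ∑ i, w i * cosh (r i) := Finset.sum_lt_sum
        (fun i _ ↦ mul_le_mul_of_nonneg_left (hlt i).le (hw0 i))
        ⟨i₀, Finset.mem_univ _, mul_lt_mul_of_pos_left (hlt i₀) hi₀⟩
  exact ⟨η, fun i ↦ (cosh_strictMonoOn.lt_iff_lt dist_nonneg (hr0 i)).1 (hη i)⟩

theorem stmt_14_general {ι : Type*} {C : ℝ} {x y : ι → ℍ} (hC0 : 0 ≤ C) (hC1 : C ≤ 1)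
    (hxy : ∀ i j, dist (y i) (y j) ≤ C * dist (x i) (x j)) (ξ : ℍ) :
    ∃ η : ℍ, ∀ i, dist η (y i) ≤ √C * dist ξ (x i) := by
  have hballs : (⋂ p : Σ i, Set.Ioi (√C * dist ξ (x i)), closedBall (y p.1) p.2).Nonempty := by
    refine nonempty_iInter_closedBall fun s ↦ ?_
    obtain ⟨η, hη⟩ := exists_forall_dist_lt_of_lipschitz (ι := s) hC0 hC1
      (fun p q ↦ hxy p.1.1 q.1.1) fun p ↦ p.1.2.2
    exact ⟨η, Set.mem_iInter₂.2 fun p hp ↦ (hη ⟨p, hp⟩).le⟩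
  obtain ⟨η, hη⟩ := hballs
  exact ⟨η, fun i ↦ le_of_forall_gt_imp_ge_of_dense fun r hr ↦ Set.mem_iInter.1 hη ⟨i, r, hr⟩⟩

end Extension

theorem stmt_14 (C : ℝ) (hC0 : 0 ≤ C) (hC1 : C < 1) :
    ∃ Cstar : ℝ, C ≤ Cstar ∧ Cstar < 1 ∧
      ∀ (X' : Set ℍ) (ξ : ℍ), ξ ∉ X' →
        ∀ f : X' → ℍ, (∀ x y : X', dist (f x) (f y) ≤ C * dist (x : ℍ) (y : ℍ)) →
          ∃ η : ℍ, ∀ x : X', dist η (f x) ≤ Cstar * dist ξ (x : ℍ) :=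
  ⟨√C, Real.le_sqrt_self_iff.2 hC1.le, (Real.sqrt_lt' one_pos).2 (by simpa using hC1),
    fun _ ξ _ _ hf ↦ stmt_14_general hC0 hC1.le hf ξ⟩
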